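/- arXiv:2212.03765 — 2 statements merged into one kernel-verified Lean document; each statement's English description precedes it below -/
import Mathlib

section
/- Let f : ℝⁿ → ℝ be continuously differentiable, satisfy the PL inequality with modulus μ > 0, and possess a unique minimizer x* with f(x*) = f* = min f. Fix p > 2 and q ∈ (1,2), and let (x, v) : [0,∞) → ℝⁿ × ℝⁿ be a differentiable solution of the GenFlow(M) dynamics v̇ᵢ(t) = ∇ᵢf(x(t)) − sign(vᵢ(t))·( |vᵢ(t)|^{1/(p−1)} + |vᵢ(t)|^{1/(q−1)} ), ẋᵢ(t) = −vᵢ(t) − sign(∇ᵢf(x(t)))·( |∇ᵢf(x(t))|^{1/(p−1)} + |∇ᵢf(x(t))|^{1/(q−1)} ), for i = 1,…,n. Then (x(t), v(t)) = (x*, 0) for all t ≥ T̄, where T̄ = 1/(a(1−α)) + 1/(b(β−1)) with α = p/(2(p−1)), β = q/(2(q−1)), a = 2^{α}·min(1, μ^{α}), and b = 2·n^{(q−2)/(2(q−1))}·min(1, μ^{β}). -/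
/-- The gradient of `f : ℝⁿ → ℝ`, as the vector of partial derivatives. -/
noncomputable def grad {n : ℕ} (f : (Fin n → ℝ) → ℝ) (x : Fin n → ℝ) : Fin n → ℝ :=
  fun i => fderiv ℝ f x (Pi.single i 1)

lemma gf_mvt {W W' : ℝ → ℝ} {C s t : ℝ} (hst : s ≤ t)
    (h : ∀ r, s ≤ r → r ≤ t → HasDerivAt W (W' r) r)
    (hC : ∀ r, s ≤ r → r ≤ t → W' r ≤ C) : W t - W s ≤ C * (t - s) := by
  refine (convex_Icc s t).image_sub_le_mul_sub_of_deriv_le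
    (fun r hr => (h r hr.1 hr.2).continuousAt.continuousWithinAt) ?_ ?_ s
    (Set.left_mem_Icc.2 hst) t (Set.right_mem_Icc.2 hst) hst
  · intro r hr
    have hr := interior_subset hr
    exact (h r hr.1 hr.2).differentiableAt.differentiableWithinAt
  · intro r hr
    have hr := interior_subset hr
    rw [(h r hr.1 hr.2).deriv]
    exact hC r hr.1 hr.2

lemma gf_fixed_time {V V' : ℝ → ℝ} {a b α β : ℝ} (ha : 0 < a) (hb : 0 < b)
    (hα : α < 1) (hβ : 1 < β) (hV0 : ∀ t, 0 ≤ V t)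
    (hV : ∀ t, 0 ≤ t → HasDerivAt V (V' t) t)
    (hV' : ∀ t, 0 ≤ t → V' t ≤ -(a * V t ^ α) - b * V t ^ β) (t : ℝ)
    (ht : 1 / (a * (1 - α)) + 1 / (b * (β - 1)) ≤ t) : V t = 0 := by
  by_contra hne
  have hpos : 0 < V t := lt_of_le_of_ne (hV0 t) (Ne.symm hne)
  have hA : 0 < a * (1 - α) := mul_pos ha (by linarith)
  have hB : 0 < b * (β - 1) := mul_pos hb (by linarith)
  set t0 := 1 / (b * (β - 1)) with ht0
  have ht0p : 0 < t0 := by positivity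
  have h1p : 0 < 1 / (a * (1 - α)) := by positivity
  have hP : ∀ r, 0 ≤ r → r ≤ t → 0 < V r := by
    intro r hr hrt
    have := gf_mvt (C := 0) hrt (fun u hu _ => hV u (hr.trans hu)) (fun u hu _ => by
      have h1 := hV' u (hr.trans hu)
      have h2 := mul_nonneg ha.le (Real.rpow_nonneg (hV0 u) α)
      have h3 := mul_nonneg hb.le (Real.rpow_nonneg (hV0 u) β)
      linarith)
    linarith
  have hk : ∀ r, 0 ≤ r → r ≤ t → V r ^ α * V r ^ (-α) = 1 ∧ V r ^ β * V r ^ (-β) = 1 := by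
    intro r hr hrt
    constructor <;> rw [← Real.rpow_add (hP r hr hrt)] <;> simp
  have s1 := gf_mvt (W := fun r => -(V r ^ (1 - β)))
    (W' := fun r => -(V' r * (1 - β) * V r ^ (1 - β - 1))) (C := -(b * (β - 1))) ht0p.le
    (fun r hr hrt => ((hV r hr).rpow_const (Or.inl (hP r hr (by linarith)).ne')).neg)
    (fun r hr hrt => by
      have hp := hP r hr (by linarith)
      have h2 := (hk r hr (by linarith)).2
      have e : (1 - β - 1) = -β := by ring
      rw [e]
      have h3 : V' r ≤ - (b * V r ^ β) := by
        have := hV' r hr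
        have := mul_nonneg ha.le (Real.rpow_nonneg (hV0 r) α)
        linarith
      have h4 : 0 ≤ (β - 1) * V r ^ (-β) := mul_nonneg (by linarith) (Real.rpow_nonneg hp.le _)
      have h5 := mul_le_mul_of_nonneg_right h3 h4
      have h6 : -(b * V r ^ β) * ((β - 1) * V r ^ (-β)) = -(b * (β - 1)) := by
        linear_combination (-(b * (β - 1))) * h2
      linarith)
  have e1 : b * (β - 1) * t0 = 1 := by rw [ht0]; exact mul_one_div_cancel hB.ne'
  have hlt : V t0 < 1 := by
    by_contra hge
    have h1 : V t0 ^ (1 - β) ≤ 1 :=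
      Real.rpow_le_one_of_one_le_of_nonpos (not_lt.1 hge) (by linarith)
    have h0 : 0 < V 0 ^ (1 - β) := Real.rpow_pos_of_pos (hP 0 le_rfl (by linarith)) _
    linarith
  have s2 := gf_mvt (W := fun r => (V r ^ (1 - α)))
    (W' := fun r => (V' r * (1 - α) * V r ^ (1 - α - 1))) (C := -(a * (1 - α)))
    (show t0 ≤ t by linarith)
    (fun r hr hrt => ((hV r (by linarith)).rpow_const
      (Or.inl (hP r (by linarith) (by linarith)).ne')))
    (fun r hr hrt => by
      have hp := hP r (by linarith) (by linarith)
      have h2 := (hk r (by linarith) (by linarith)).1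
      have e : (1 - α - 1) = -α := by ring
      simp only [e]
      have h3 : V' r ≤ - (a * V r ^ α) := by
        have := hV' r (by linarith)
        have := mul_nonneg hb.le (Real.rpow_nonneg (hV0 r) β)
        linarith
      have h4 : 0 ≤ (1 - α) * V r ^ (-α) := mul_nonneg (by linarith) (Real.rpow_nonneg hp.le _)
      have h5 := mul_le_mul_of_nonneg_right h3 h4
      have h6 : -(a * V r ^ α) * ((1 - α) * V r ^ (-α)) = -(a * (1 - α)) := by
        linear_combination (-(a * (1 - α))) * h2
      linarith)
  have h1 : V t0 ^ (1 - α) < 1 := Real.rpow_lt_one (hV0 _) hlt (by linarith)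
  have h2 : 0 < V t ^ (1 - α) := Real.rpow_pos_of_pos hpos _
  have h3 : a * (1 - α) * (1 / (a * (1 - α))) = 1 := mul_one_div_cancel hA.ne'
  have h4 := mul_le_mul_of_nonneg_left (show 1 / (a * (1 - α)) ≤ t - t0 by linarith) hA.le
  linarith

lemma gf_sq_rpow (y α : ℝ) : (y ^ 2) ^ α = |y| ^ (2 * α) := by
  rw [← sq_abs, ← Real.rpow_natCast, ← Real.rpow_mul (abs_nonneg y)]
  norm_num

lemma gf_sum_low {ι : Type*} (s : Finset ι) (y : ι → ℝ) {α : ℝ} (h0 : 0 < α) (h1 : α ≤ 1) :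
    (∑ i ∈ s, y i ^ 2) ^ α ≤ ∑ i ∈ s, |y i| ^ (2 * α) := by
  classical
  induction s using Finset.induction_on with
  | empty => simp [Real.zero_rpow h0.ne']
  | insert i s hi ih =>
    rw [Finset.sum_insert hi, Finset.sum_insert hi, ← gf_sq_rpow]
    refine (Real.rpow_add_le_add_rpow (sq_nonneg _)
      (Finset.sum_nonneg fun _ _ => sq_nonneg _) h0.le h1).trans ?_
    linarith

lemma gf_sum_high {n : ℕ} (hn : 0 < n) (y : Fin n → ℝ) {β : ℝ} (h1 : 1 ≤ β) :
    (n : ℝ) ^ (1 - β) * (∑ i, y i ^ 2) ^ β ≤ ∑ i, |y i| ^ (2 * β) := by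
  have h := Real.rpow_sum_le_const_mul_sum_rpow_of_nonneg (Finset.univ : Finset (Fin n))
    (f := fun i => y i ^ 2) h1 (fun _ _ => sq_nonneg _)
  simp only [gf_sq_rpow, Finset.card_univ, Fintype.card_fin] at h
  have hn' : (0 : ℝ) < n := by exact_mod_cast hn
  have h2 := mul_le_mul_of_nonneg_left h (Real.rpow_nonneg hn'.le (1 - β))
  rw [← mul_assoc, ← Real.rpow_add hn'] at h2
  simpa using h2

lemma gf_add_high {a b β : ℝ} (ha : 0 ≤ a) (hb : 0 ≤ b) (h1 : 1 ≤ β) :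
    2 * (a + b) ^ β ≤ 2 ^ β * (a ^ β + b ^ β) := by
  have h : (a + b) ^ β ≤ (2 : ℝ) ^ (β - 1) * (a ^ β + b ^ β) := by
    lift a to NNReal using ha
    lift b to NNReal using hb
    exact_mod_cast NNReal.rpow_add_le_mul_rpow_add_rpow a b h1
  have e : (2 : ℝ) ^ β = 2 * 2 ^ (β - 1) := by
    rw [Real.rpow_sub_one (by norm_num)]; ring
  rw [e]; linarith

/-- From PL: lower bound for `(Σg²)^γ + (Σv²)^γ`. -/
lemma gf_pl {μ F G K γ : ℝ} (hμ : 0 < μ) (hF : 0 ≤ F) (hK : 0 ≤ K) (hγ : 0 < γ)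
    (h : μ * F ≤ 1 / 2 * G) :
    2 ^ γ * min 1 (μ ^ γ) * (F ^ γ + K ^ γ) ≤ G ^ γ + (2 * K) ^ γ := by
  have h1 : (2 * μ * F) ^ γ ≤ G ^ γ :=
    Real.rpow_le_rpow (by positivity) (by linarith) hγ.le
  rw [Real.mul_rpow (by positivity) hF, Real.mul_rpow (by norm_num) hμ.le] at h1
  rw [Real.mul_rpow (by norm_num) hK]
  have hA := mul_le_mul_of_nonneg_left (min_le_right 1 (μ ^ γ))
    (show 0 ≤ (2 : ℝ) ^ γ * F ^ γ by positivity)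
  have hB := mul_le_mul_of_nonneg_left (min_le_left 1 (μ ^ γ))
    (show 0 ≤ (2 : ℝ) ^ γ * K ^ γ by positivity)
  linarith

lemma gf_sign_mul (y p : ℝ) (hp : 1 < p) :
    y * (Real.sign y * |y| ^ (1 / (p - 1))) = |y| ^ (2 * (p / (2 * (p - 1)))) := by
  have hp1 : 0 < p - 1 := by linarith
  have e : 2 * (p / (2 * (p - 1))) = 1 + 1 / (p - 1) := by field_simp; ring
  rw [e]
  by_cases hy : y = 0
  · subst hy
    have : (1 + 1 / (p - 1)) ≠ 0 := by positivity
    rw [abs_zero, Real.zero_rpow this, zero_mul]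
  · rw [Real.rpow_add (abs_pos.2 hy), Real.rpow_one, ← mul_assoc]
    congr 1
    rcases lt_or_gt_of_ne hy with h | h
    · rw [Real.sign_of_neg h, abs_of_neg h]; ring
    · rw [Real.sign_of_pos h, abs_of_pos h]; ring

lemma gf_chain {n : ℕ} {f : (Fin n → ℝ) → ℝ} (hf : ContDiff ℝ 1 f) {x : ℝ → Fin n → ℝ}
    {x' : Fin n → ℝ} {t : ℝ} (hx : ∀ i, HasDerivAt (fun s => x s i) (x' i) t) :
    HasDerivAt (fun s => f (x s)) (∑ i, grad f (x t) i * x' i) t := by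
  have h1 : HasDerivAt x x' t := hasDerivAt_pi.2 hx
  have h2 := ((hf.differentiable one_ne_zero) (x t)).hasFDerivAt
  have h3 := h2.comp_hasDerivAt t h1
  refine h3.congr_deriv ?_
  have := LinearMap.pi_apply_eq_sum_univ (fderiv ℝ f (x t)).toLinearMap x'
  simp only [ContinuousLinearMap.coe_coe] at this
  rw [this]
  symm
  refine Finset.sum_congr rfl fun i _ => ?_
  rw [grad, smul_eq_mul, mul_comm]
  congr 2
  ext j
  simp [Pi.single_apply, eq_comm]

/-- **GenFlow(M) fixed-time convergence** (Theorem 2). If `f` is `C¹`, satisfies the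
PL inequality with modulus `μ > 0` and has a unique minimizer `x*`, then any solution
of the momentum dynamics
`v̇ᵢ = ∇ᵢf(x) - sign(vᵢ)(|vᵢ|^{1/(p-1)} + |vᵢ|^{1/(q-1)})`,
`ẋᵢ = -vᵢ - sign(∇ᵢf(x))(|∇ᵢf(x)|^{1/(p-1)} + |∇ᵢf(x)|^{1/(q-1)})`
reaches `(x*, 0)` by the time `T̄ = 1/(a(1-α)) + 1/(b(β-1))` with `α = p/(2(p-1))`,
`β = q/(2(q-1))`, `a = 2^α min(1, μ^α)`, `b = 2 n^{(q-2)/(2(q-1))} min(1, μ^β)`. -/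
theorem genFlowM_fixed_time_convergence
    {n : ℕ} (f : (Fin n → ℝ) → ℝ) (hf : ContDiff ℝ 1 f)
    (μ : ℝ) (hμ : 0 < μ)
    (xstar : Fin n → ℝ) (fstar : ℝ) (hfstar : fstar = f xstar)
    (hmin : ∀ y, fstar ≤ f y)
    (huniq : ∀ y, (∀ z, f y ≤ f z) → y = xstar)
    (hPL : ∀ y, μ * (f y - fstar) ≤ (1 / 2) * ∑ i, grad f y i ^ 2)
    (p q : ℝ) (hp : 2 < p) (hq : q ∈ Set.Ioo (1 : ℝ) 2)
    (x v : ℝ → (Fin n → ℝ))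
    (hv : ∀ t : ℝ, 0 ≤ t → ∀ i, HasDerivAt (fun s => v s i)
      (grad f (x t) i -
        Real.sign (v t i) * (|v t i| ^ (1 / (p - 1)) + |v t i| ^ (1 / (q - 1)))) t)
    (hx : ∀ t : ℝ, 0 ≤ t → ∀ i, HasDerivAt (fun s => x s i)
      (-v t i -
        Real.sign (grad f (x t) i) *
          (|grad f (x t) i| ^ (1 / (p - 1)) + |grad f (x t) i| ^ (1 / (q - 1)))) t) :
    ∀ t : ℝ,
      1 / ((2 : ℝ) ^ (p / (2 * (p - 1))) * min 1 (μ ^ (p / (2 * (p - 1)))) *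
            (1 - p / (2 * (p - 1)))) +
        1 / (2 * (n : ℝ) ^ ((q - 2) / (2 * (q - 1))) * min 1 (μ ^ (q / (2 * (q - 1)))) *
            (q / (2 * (q - 1)) - 1)) ≤ t →
      x t = xstar ∧ v t = 0 := by
  intro t ht
  rcases Nat.eq_zero_or_pos n with hn | hn
  · subst hn
    exact ⟨Subsingleton.elim _ _, Subsingleton.elim _ _⟩
  obtain ⟨hq1, hq2⟩ := hq
  have hp1 : 0 < p - 1 := by linarith
  have hq1' : 0 < q - 1 := by linarith
  have hn' : (0 : ℝ) < n := by exact_mod_cast hn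
  have hexp : (q - 2) / (2 * (q - 1)) = 1 - q / (2 * (q - 1)) := by field_simp; ring
  rw [hexp] at ht
  have hα0 : 0 < p / (2 * (p - 1)) := by positivity
  have hα1 : p / (2 * (p - 1)) < 1 := by rw [div_lt_one (by positivity)]; linarith
  have hβ1 : 1 < q / (2 * (q - 1)) := by rw [one_lt_div (by positivity)]; linarith
  have hsp := fun y => gf_sign_mul y p (by linarith)
  have hsq := fun y => gf_sign_mul y q hq1
  set α := p / (2 * (p - 1)) with hα
  set β := q / (2 * (q - 1)) with hβ
  have hF : ∀ s, 0 ≤ f (x s) - fstar := fun s => by linarith [hmin (x s)]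
  have hK : ∀ s, 0 ≤ 1 / 2 * ∑ i, v s i ^ 2 := fun s =>
    mul_nonneg (by norm_num) (Finset.sum_nonneg fun _ _ => sq_nonneg _)
  have key := gf_fixed_time
    (V := fun s => (f (x s) - fstar) + 1 / 2 * ∑ i, v s i ^ 2)
    (V' := fun s => -(∑ i, |grad f (x s) i| ^ (2 * α) + ∑ i, |v s i| ^ (2 * α))
      - (∑ i, |grad f (x s) i| ^ (2 * β) + ∑ i, |v s i| ^ (2 * β)))
    (a := 2 ^ α * min 1 (μ ^ α)) (b := 2 * (n : ℝ) ^ (1 - β) * min 1 (μ ^ β))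
    (by have := lt_min one_pos (Real.rpow_pos_of_pos hμ α); positivity)
    (by have := lt_min one_pos (Real.rpow_pos_of_pos hμ β); positivity)
    hα1 hβ1 (fun s => add_nonneg (hF s) (hK s)) ?_ ?_ t ht
  · have hv0 : ∑ i, v t i ^ 2 = 0 := by linarith [hF t, hK t]
    have hf0 : f (x t) = fstar := by linarith [hF t, hK t]
    constructor
    · exact huniq _ fun z => by rw [hf0]; exact hmin z
    · ext i
      rw [Finset.sum_eq_zero_iff_of_nonneg (fun _ _ => sq_nonneg _)] at hv0
      simpa using hv0 i (Finset.mem_univ i)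
  · intro s hs
    have h1 := (gf_chain hf (hx s hs)).sub_const fstar
    have h2 := (HasDerivAt.fun_sum (u := Finset.univ)
      (fun i _ => (hv s hs i).fun_pow 2)).const_mul (1 / 2 : ℝ)
    refine (h1.add h2).congr_deriv ?_
    symm
    rw [Finset.mul_sum, ← Finset.sum_add_distrib, ← Finset.sum_add_distrib,
      ← Finset.sum_add_distrib, ← Finset.sum_neg_distrib, ← Finset.sum_sub_distrib]
    refine Finset.sum_congr rfl fun i _ => ?_
    rw [← hsp, ← hsp, ← hsq, ← hsq]
    push_cast
    ring
  · intro s hs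
    have hv2 : 2 * (1 / 2 * ∑ i, v s i ^ 2) = ∑ i, v s i ^ 2 := by ring
    have hA := gf_pl hμ (hF s) (hK s) hα0 (hPL (x s))
    have hB := gf_pl hμ (hF s) (hK s) (by linarith : 0 < β) (hPL (x s))
    rw [hv2] at hA hB
    have a1 := gf_sum_low Finset.univ (grad f (x s)) hα0 hα1.le
    have a2 := gf_sum_low Finset.univ (v s) hα0 hα1.le
    have a3 := mul_le_mul_of_nonneg_left
      (Real.rpow_add_le_add_rpow (hF s) (hK s) hα0.le hα1.le)
      (show 0 ≤ 2 ^ α * min 1 (μ ^ α) by positivity)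
    have b1 := gf_sum_high hn (grad f (x s)) hβ1.le
    have b2 := gf_sum_high hn (v s) hβ1.le
    have b3 := mul_le_mul_of_nonneg_left (gf_add_high (hF s) (hK s) hβ1.le)
      (show 0 ≤ (n : ℝ) ^ (1 - β) * min 1 (μ ^ β) by positivity)
    have b4 := mul_le_mul_of_nonneg_left hB (Real.rpow_nonneg hn'.le (1 - β))
    linarith
end

section
/- Let f : ℝⁿ → ℝ be continuously differentiable and satisfy the PL inequality with modulus μ > 0, with f* = min f. Fix p > 2 and q ∈ (1,2), let α = p/(2(p−1)) and β = q/(2(q−1)), and let (x, v) : [0,∞) → ℝⁿ × ℝⁿ be a differentiable solution of the GenFlow(M) dynamics v̇ᵢ = ∇ᵢf(x) − sign(vᵢ)(|vᵢ|^{1/(p−1)} + |vᵢ|^{1/(q−1)}), ẋᵢ = −vᵢ − sign(∇ᵢf(x))(|∇ᵢf(x)|^{1/(p−1)} + |∇ᵢf(x)|^{1/(q−1)}). Define V(t) = (f(x(t)) − f*) + (1/2)∑_{i=1}^n vᵢ(t)². Then for all t ≥ 0, d/dt V(t) ≤ −2^{α}·min(1, μ^{α})·V(t)^{α} − 2·n^{(q−2)/(2(q−1))}·min(1,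 μ^{β})·V(t)^{β}. -/
lemma aux_sum_rpow {ι : Type*} (s : Finset ι) (a : ι → ℝ) (ha : ∀ i, 0 ≤ a i) (r : ℝ)
    (hr : 0 < r) (hr1 : r ≤ 1) : (∑ i ∈ s, a i) ^ r ≤ ∑ i ∈ s, a i ^ r := by
  classical
  induction s using Finset.induction_on with
  | empty => simp [Real.zero_rpow hr.ne']
  | insert i s hi ih =>
    rw [Finset.sum_insert hi, Finset.sum_insert hi]
    refine (Real.rpow_add_le_add_rpow (ha i) (Finset.sum_nonneg fun j _ => ha j) hr.le hr1).trans ?_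
    gcongr

lemma aux_term (g p : ℝ) (hp : 1 < p) :
    g * (Real.sign g * |g| ^ (1 / (p - 1))) = (g ^ 2) ^ (p / (2 * (p - 1))) := by
  have h1 : 0 < p - 1 := by linarith
  rcases eq_or_ne g 0 with rfl | hg
  · have : p / (2 * (p - 1)) ≠ 0 := by positivity
    simp [Real.zero_rpow this]
  have hs : g * Real.sign g = |g| := by
    rcases lt_or_gt_of_ne hg with h | h
    · rw [Real.sign_of_neg h, abs_of_neg h]; ring
    · rw [Real.sign_of_pos h, abs_of_pos h]; ring
  have hg' : 0 < |g| := abs_pos.mpr hg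
  rw [← mul_assoc, hs, ← sq_abs, ← Real.rpow_natCast, ← Real.rpow_mul hg'.le]
  nth_rewrite 1 [← Real.rpow_one |g|]
  rw [← Real.rpow_add hg']
  congr 1
  push_cast
  field_simp
  ring

lemma aux_min (μ V S r : ℝ) (hμ : 0 < μ) (hV : 0 ≤ V) (hr : 0 < r) (h1 : 2 * min 1 μ * V ≤ S) :
    2 ^ r * min 1 (μ ^ r) * V ^ r ≤ S ^ r := by
  have hm : 0 < min 1 μ := lt_min one_pos hμ
  have h2 : min 1 (μ ^ r) = (min 1 μ) ^ r := by
    rcases le_total 1 μ with h | h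
    · rw [min_eq_left h, min_eq_left (Real.one_le_rpow h hr.le), Real.one_rpow]
    · rw [min_eq_right h, min_eq_right (Real.rpow_le_one hμ.le h hr.le)]
  rw [h2, ← Real.mul_rpow (by norm_num) hm.le, ← Real.mul_rpow (by positivity) hV]
  exact Real.rpow_le_rpow (by positivity) h1 hr.le

lemma aux_beta (n : ℕ) (hn : n ≠ 0) (a : Fin n ⊕ Fin n → ℝ) (ha : ∀ i, 0 ≤ a i) (b : ℝ)
    (hb : 1 ≤ b) : (2 * (n : ℝ)) ^ (1 - b) * (∑ i, a i) ^ b ≤ ∑ i, a i ^ b := by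
  have h := Real.rpow_sum_le_const_mul_sum_rpow Finset.univ a hb
  simp only [abs_of_nonneg (ha _)] at h
  have hN : 0 < 2 * (n : ℝ) := by positivity
  have hc : ((Finset.univ : Finset (Fin n ⊕ Fin n)).card : ℝ) = 2 * n := by
    simp; ring
  rw [hc] at h
  calc _ ≤ (2 * (n : ℝ)) ^ (1 - b) * ((2 * (n : ℝ)) ^ (b - 1) * ∑ i, a i ^ b) := by gcongr
    _ = _ := by
      rw [← mul_assoc, ← Real.rpow_add hN]; simp

/-- **Key differential inequality in the proof of Theorem 2.** Along any solution of
the GenFlow(M) dynamics for a `C¹` function `f` satisfying the PL inequality with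
modulus `μ > 0`, the Lyapunov function `V(t) = (f(x(t)) - f*) + (1/2)∑ᵢ vᵢ(t)²`
satisfies `V̇ ≤ -2^α min(1,μ^α) V^α - 2 n^{(q-2)/(2(q-1))} min(1,μ^β) V^β` with
`α = p/(2(p-1))`, `β = q/(2(q-1))`. -/
theorem genFlowM_lyapunov_differential_inequality
    {n : ℕ} (f : (Fin n → ℝ) → ℝ) (hf : ContDiff ℝ 1 f)
    (μ : ℝ) (hμ : 0 < μ)
    (fstar : ℝ) (hfstar : ∃ xstar, f xstar = fstar ∧ ∀ y, fstar ≤ f y)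
    (hPL : ∀ y, μ * (f y - fstar) ≤ (1 / 2) * ∑ i, grad f y i ^ 2)
    (p q : ℝ) (hp : 2 < p) (hq : q ∈ Set.Ioo (1 : ℝ) 2)
    (x v : ℝ → (Fin n → ℝ))
    (hv : ∀ t : ℝ, 0 ≤ t → ∀ i, HasDerivAt (fun s => v s i)
      (grad f (x t) i -
        Real.sign (v t i) * (|v t i| ^ (1 / (p - 1)) + |v t i| ^ (1 / (q - 1)))) t)
    (hx : ∀ t : ℝ, 0 ≤ t → ∀ i, HasDerivAt (fun s => x s i)
      (-v t i -
        Real.sign (grad f (x t) i) *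
          (|grad f (x t) i| ^ (1 / (p - 1)) + |grad f (x t) i| ^ (1 / (q - 1)))) t) :
    ∀ t : ℝ, 0 ≤ t →
      deriv (fun s => (f (x s) - fstar) + (1 / 2) * ∑ i, v s i ^ 2) t ≤
        -(2 : ℝ) ^ (p / (2 * (p - 1))) * min 1 (μ ^ (p / (2 * (p - 1)))) *
            ((f (x t) - fstar) + (1 / 2) * ∑ i, v t i ^ 2) ^ (p / (2 * (p - 1))) -
          2 * (n : ℝ) ^ ((q - 2) / (2 * (q - 1))) * min 1 (μ ^ (q / (2 * (q - 1)))) *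
            ((f (x t) - fstar) + (1 / 2) * ∑ i, v t i ^ 2) ^ (q / (2 * (q - 1))) := by
  intro t ht
  obtain ⟨hq1, hq2⟩ := hq
  have hp1 : 0 < p - 1 := by linarith
  have hq1' : 0 < q - 1 := by linarith
  obtain ⟨xs, hxs, hmin⟩ := hfstar
  set g := grad f (x t) with hg
  set α := p / (2 * (p - 1)) with hα
  set β := q / (2 * (q - 1)) with hβ
  have hα0 : 0 < α := by positivity
  have hα1 : α ≤ 1 := by rw [hα, div_le_one (by positivity)]; linarith
  have hβ1 : 1 ≤ β := by rw [hβ, le_div_iff₀ (by positivity)]; linarith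
  have hβe : (q - 2) / (2 * (q - 1)) = 1 - β := by rw [hβ]; field_simp; ring
  -- derivative
  have hxd := hasDerivAt_pi.2 (hx t ht)
  have hfx := ((hf.differentiable (by norm_num)) (x t)).hasFDerivAt.comp_hasDerivAt t hxd
  have hvd : HasDerivAt (fun s => ∑ i, v s i ^ 2) _ t :=
    HasDerivAt.fun_sum (u := Finset.univ) (fun i _ => (hv t ht i).fun_pow 2)
  have hD := (hfx.sub_const fstar).add (hvd.const_mul (1 / 2))
  have hlin : ∀ w : Fin n → ℝ, fderiv ℝ f (x t) w = ∑ i, w i * g i := by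
    intro w
    have hw : w = ∑ i, w i • (Pi.single i 1 : Fin n → ℝ) := by
      ext j; simp [Finset.sum_apply, Pi.single_apply]
    conv_lhs => rw [hw]
    simp [map_sum, hg, grad]
  rw [hlin] at hD
  have hV0 : 0 ≤ (f (x t) - fstar) + (1 / 2) * ∑ i, v t i ^ 2 := by
    have := hmin (x t)
    have h2 : 0 ≤ ∑ i, v t i ^ 2 := Finset.sum_nonneg fun i _ => sq_nonneg _
    linarith
  set a : Fin n ⊕ Fin n → ℝ := Sum.elim (fun i => g i ^ 2) (fun i => v t i ^ 2) with ha
  have ha0 : ∀ i, 0 ≤ a i := by rintro (i | i) <;> simp [ha] <;> positivity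
  have hder : deriv (fun s => (f (x s) - fstar) + (1 / 2) * ∑ i, v s i ^ 2) t
      = -(∑ i, a i ^ α) - ∑ i, a i ^ β := by
    refine (HasDerivAt.deriv hD).trans ?_
    simp only [Fintype.sum_sum_type, ha, Sum.elim_inl, Sum.elim_inr, Finset.mul_sum]
    simp only [hα, hβ, ← aux_term _ p (by linarith : 1 < p), ← aux_term _ q hq1]
    simp only [← Finset.sum_add_distrib, ← Finset.sum_sub_distrib, ← Finset.sum_neg_distrib]
    refine Finset.sum_congr rfl fun i _ => ?_
    push_cast
    ring
  rw [hder]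
  set V := (f (x t) - fstar) + (1 / 2) * ∑ i, v t i ^ 2 with hV
  have hS : 2 * min 1 μ * V ≤ ∑ i, a i := by
    simp only [Fintype.sum_sum_type, ha, Sum.elim_inl, Sum.elim_inr]
    have h1 := hPL (x t)
    have h2 : 0 ≤ ∑ i, v t i ^ 2 := Finset.sum_nonneg fun i _ => sq_nonneg _
    have h3 : 0 ≤ f (x t) - fstar := by linarith [hmin (x t)]
    have h4 := mul_le_mul_of_nonneg_right (min_le_right 1 μ) h3
    have h5 := mul_le_mul_of_nonneg_right (min_le_left 1 μ) h2
    rw [hV]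
    linarith
  have hA := (aux_min μ V _ α hμ hV0 hα0 hS).trans (aux_sum_rpow Finset.univ a ha0 α hα0 hα1)
  have hB : 2 * (n : ℝ) ^ ((q - 2) / (2 * (q - 1))) * min 1 (μ ^ β) * V ^ β ≤ ∑ i, a i ^ β := by
    rcases eq_or_ne n 0 with rfl | hn
    · have hV' : V = 0 := by
        have : x t = xs := Subsingleton.elim _ _
        simp [hV, this, hxs]
      simp [hV', Real.zero_rpow (by linarith : β ≠ 0)]
    · refine le_trans ?_ (aux_beta n hn a ha0 β hβ1)
      have h := aux_min μ V _ β hμ hV0 (by linarith) hS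
      have h2 : (2 : ℝ) ^ (1 - β) * 2 ^ β = 2 := by
        rw [← Real.rpow_add (by norm_num)]; simp
      calc _ = (2 * (n : ℝ)) ^ (1 - β) * (2 ^ β * min 1 (μ ^ β) * V ^ β) := by
            rw [hβe, Real.mul_rpow (by norm_num) (by positivity)]
            linear_combination (-(n : ℝ) ^ (1 - β) * min 1 (μ ^ β) * V ^ β) * h2
        _ ≤ _ := by gcongr
  linarith
end
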